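/- Let A be a Hopf *-algebra over ℂ, α : A → A an admissible bijection with α-twisted antipode S_α = S∘α, and η : A → D any cocycle for a *-representation π on a complex inner product space D. Then for every a ∈ A with Δ(a) = ∑_{i∈s} xᵢ ⊗ yᵢ (a finite sum): ∑_{i∈s} ⟨η((S_α(xᵢ))*), η(α(yᵢ))⟩ = ∑_{i∈s} ⟨η((α(xᵢ))*), η(S_α(yᵢ))⟩. -/

import Mathlib

/-!
Since `α` commutes with the comultiplication, replacing `a` by `α a` reduces the claim to the
untwisted identity `∑ B(S x₁, x₂) = ∑ B(x₁, S x₂)` for the bilinear form `B(x, y) = ⟨η(x*), η(y)⟩`.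

The cocycle law makes `B` a Hochschild 2-cocycle, in two halves (`pairing_mul_right` and
`pairing_mul_left`): with `T(x, y, z) = ⟨η(x*), π(y)η(z)⟩`,
`B(x, yz) = T(x, y, z) + ε(z) B(x, y)` and `B(xy, z) = T(x, y, z) + ε(x) B(y, z)`.
Evaluate both at `x₁, S x₂, x₃`. By the antipode axiom the left-hand sides become `B(x, 1)` and
`B(1, x)`, which vanish because `η 1 = 0`, while the last terms become `B(x₁, S x₂)` and
`B(S x₁, x₂)` by the counit axiom. Both are therefore equal to `-T(x₁, S x₂, x₃)`, by
coassociativity.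
-/

open scoped TensorProduct ComplexConjugate ComplexOrder InnerProductSpace
open Coalgebra

universe u

variable {A : Type u} [Ring A] [HopfAlgebra ℂ A] [StarRing A] [StarModule ℂ A]

/-- The star-compatibility axioms making a Hopf algebra over `ℂ` into a Hopf `*`-algebra:
`Δ(a*) = (*⊗*)(Δ a)` (expressed in Sweedler form), `ε(a*) = conj (ε a)`,
and `S(S(a*)*) = a`.  (The properties `(ab)* = b*a*`, `1* = 1`, involutivity and
conjugate-linearity of `*` are encoded by `StarRing A` and `StarModule ℂ A`.) -/
def IsHopfStar (A : Type u) [Ring A] [HopfAlgebra ℂ A] [StarRing A] [StarModule ℂ A] : Prop :=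
  (∀ (a : A) (ι : Type u) (s : Finset ι) (x y : ι → A),
      comul (R := ℂ) a = ∑ i ∈ s, x i ⊗ₜ[ℂ] y i →
      comul (R := ℂ) (star a) = ∑ i ∈ s, star (x i) ⊗ₜ[ℂ] star (y i)) ∧
  (∀ a : A, counit (R := ℂ) (star a) = conj (counit (R := ℂ) a)) ∧
  (∀ a : A, HopfAlgebra.antipode (R := ℂ)
      (star (HopfAlgebra.antipode (R := ℂ) (star a))) = a)

/-- `α : A → A` is an admissible bijection: (i) a unital algebra homomorphism
(`ℂ`-linearity is part of the data `α : A →ₗ[ℂ] A`); (ii) `α((α(a*))*) = a`;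
(iii) `(α⊗α)∘Δ = Δ∘α`; (iv) `id + α` is bijective; (v) `id⊗id + α⊗α` is bijective. -/
structure IsAdmissible (α : A →ₗ[ℂ] A) : Prop where
  map_one : α 1 = 1
  map_mul : ∀ a b : A, α (a * b) = α a * α b
  star_cond : ∀ a : A, α (star (α (star a))) = a
  comul_comp : ∀ a : A,
    TensorProduct.map α α (comul (R := ℂ) a) = comul (R := ℂ) (α a)
  bij_add : Function.Bijective ((LinearMap.id + α : A →ₗ[ℂ] A))
  bij_tensor :
    Function.Bijective ((LinearMap.id + TensorProduct.map α α : A ⊗[ℂ] A →ₗ[ℂ] A ⊗[ℂ] A))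

/-- The `α`-twisted antipode `S_α = S ∘ α`. -/
def twistedAntipode (α : A →ₗ[ℂ] A) : A →ₗ[ℂ] A :=
  HopfAlgebra.antipode (R := ℂ) ∘ₗ α

variable {D : Type u} [NormedAddCommGroup D] [InnerProductSpace ℂ D]

/-- A `*`-representation of `A` on the complex inner product space `D`:
a unital algebra homomorphism into the linear endomorphisms of `D` such that
`⟨π(a*)ξ, ζ⟩ = ⟨ξ, π(a)ζ⟩`. -/
def IsStarRep (π : A →ₐ[ℂ] Module.End ℂ D) : Prop :=
  ∀ (a : A) (ξ ζ : D), ⟪π (star a) ξ, ζ⟫_ℂ = ⟪ξ, π a ζ⟫_ℂ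

/-- A cocycle for the representation `π`: `η(ab) = π(a)η(b) + ε(b)·η(a)`. -/
def IsCocycle (π : A →ₐ[ℂ] Module.End ℂ D) (η : A →ₗ[ℂ] D) : Prop :=
  ∀ a b : A, η (a * b) = π a (η b) + counit (R := ℂ) b • η a

/-- A generating functional on `A`: a linear functional with `L(1) = 0`,
`L(a*) = conj (L a)`, and `L(a*a)` a nonnegative real for `a ∈ ker ε`. -/
structure IsGenFunctional (L : A →ₗ[ℂ] ℂ) : Prop where
  map_one : L 1 = 0
  hermitian : ∀ a : A, L (star a) = conj (L a)
  cond_pos : ∀ a : A, counit (R := ℂ) a = 0 → 0 ≤ L (star a * a)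

/-- `η` yields the coboundary of `L`:
`L(ab) = ε(a)L(b) + L(a)ε(b) + ⟨η(a*), η(b)⟩`. -/
def YieldsCoboundary (η : A →ₗ[ℂ] D) (L : A →ₗ[ℂ] ℂ) : Prop :=
  ∀ a b : A, L (a * b) =
    counit (R := ℂ) a * L b + L a * counit (R := ℂ) b + ⟪η (star a), η b⟫_ℂ

/-- `η` is `α`-real: `⟨η(a), η(b)⟩ = ⟨η((S_α b)*), η(S_α(a*))⟩`. -/
def IsAlphaReal (α : A →ₗ[ℂ] A) (η : A →ₗ[ℂ] D) : Prop :=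
  ∀ a b : A, ⟪η a, η b⟫_ℂ =
    ⟪η (star (twistedAntipode α b)), η (twistedAntipode α (star a))⟫_ℂ

/-- The map `x ↦ ⟨η(x*), ·⟩`, which is linear in `x` because both `*` and the first slot of the
inner product are conjugate-linear. -/
noncomputable def starPairing (η : A →ₗ[ℂ] D) : A →ₗ[ℂ] D →ₗ[ℂ] ℂ :=
  LinearMap.mk₂ ℂ (fun x ξ => ⟪η (star x), ξ⟫_ℂ)
    (fun x y ξ => by simp)
    (fun c x ξ => by simp [mul_comm])
    (fun x ξ ζ => by simp)
    (fun c x ξ => by simp)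

@[simp]
lemma starPairing_apply (η : A →ₗ[ℂ] D) (x : A) (ξ : D) :
    starPairing η x ξ = ⟪η (star x), ξ⟫_ℂ := rfl

/-- The linear functional `x ⊗ (y ⊗ z) ↦ ⟨η(x*), π(S y) η(z)⟩`, the common value, up to sign, of
both sides of the untwisted identity. -/
noncomputable def triplePairing (π : A →ₐ[ℂ] Module.End ℂ D) (η : A →ₗ[ℂ] D) :
    A ⊗[ℂ] (A ⊗[ℂ] A) →ₗ[ℂ] ℂ :=
  TensorProduct.lift ((starPairing η).compl₂ (TensorProduct.lift
    ((π.toLinearMap ∘ₗ HopfAlgebra.antipode (R := ℂ) : A →ₗ[ℂ] Module.End ℂ D).compl₂ η)))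

@[simp]
lemma triplePairing_tmul (π : A →ₐ[ℂ] Module.End ℂ D) (η : A →ₗ[ℂ] D) (x y z : A) :
    triplePairing π η (x ⊗ₜ[ℂ] (y ⊗ₜ[ℂ] z)) =
      ⟪η (star x), π (HopfAlgebra.antipode (R := ℂ) y) (η z)⟫_ℂ := rfl

lemma cocycle_one {π : A →ₐ[ℂ] Module.End ℂ D} {η : A →ₗ[ℂ] D} (hη : IsCocycle π η) :
    η 1 = 0 := by
  simpa using hη 1 1

/-- The counit axiom `∑ ε(x₂) x₁ = a`, mirroring `Coalgebra.sum_counit_smul`. -/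
lemma sum_counit_smul_left {C ι : Type*} [AddCommGroup C] [Module ℂ C] [Coalgebra ℂ C] {a : C}
    (r : Coalgebra.Repr ℂ a ι) :
    ∑ j ∈ r.index, counit (R := ℂ) (r.right j) • r.left j = a := by
  simpa only [map_sum, TensorProduct.rid_tmul, one_smul]
    using congrArg (TensorProduct.rid ℂ C) (sum_tmul_counit_eq r)

lemma pairing_mul_right {π : A →ₐ[ℂ] Module.End ℂ D} {η : A →ₗ[ℂ] D} (hη : IsCocycle π η)
    (x y z : A) :
    ⟪η (star x), η (y * z)⟫_ℂ =
      ⟪η (star x), π y (η z)⟫_ℂ + counit (R := ℂ) z * ⟪η (star x), η y⟫_ℂ := by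
  rw [hη, inner_add_right, inner_smul_right]

lemma pairing_mul_left (hA : IsHopfStar A) {π : A →ₐ[ℂ] Module.End ℂ D} {η : A →ₗ[ℂ] D}
    (hπ : IsStarRep π) (hη : IsCocycle π η) (x y z : A) :
    ⟪η (star (x * y)), η z⟫_ℂ =
      ⟪η (star x), π y (η z)⟫_ℂ + counit (R := ℂ) x * ⟪η (star y), η z⟫_ℂ := by
  rw [star_mul, hη, inner_add_left, inner_smul_left, hπ, hA.2.1, Complex.conj_conj]

/-- Follows by expanding `⟨η(x*), η(S(y₁) y₂)⟩`, which sums to zero over `Δ y` by the antipode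
axiom. The `x i` and `y i` are arbitrary here; in the application they come from a comultiplication,
and the right-hand side is `-∑ ⟨η(x₁*), π(S x₂) η(x₃)⟩`. -/
lemma sum_pairing_antipode_right {π : A →ₐ[ℂ] Module.End ℂ D} {η : A →ₗ[ℂ] D}
    (hη : IsCocycle π η) {ι : Type*} (s : Finset ι) (x y : ι → A) :
    ∑ i ∈ s, ⟪η (star (x i)), η (HopfAlgebra.antipode (R := ℂ) (y i))⟫_ℂ =
      -triplePairing π η (∑ i ∈ s, x i ⊗ₜ[ℂ] comul (R := ℂ) (y i)) := by
  rw [map_sum, ← Finset.sum_neg_distrib]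
  refine Finset.sum_congr rfl fun i _ => ?_
  have r := Coalgebra.Repr.arbitrary ℂ (y i)
  have h1 : ∑ j ∈ r.index, ⟪η (star (x i)),
      η (HopfAlgebra.antipode (R := ℂ) (r.left j) * r.right j)⟫_ℂ = 0 := by
    rw [← inner_sum, ← map_sum, HopfAlgebra.sum_antipode_mul_eq_smul r, map_smul,
      cocycle_one hη, smul_zero, inner_zero_right]
  have h2 : ∑ j ∈ r.index, counit (R := ℂ) (r.right j) *
      ⟪η (star (x i)), η (HopfAlgebra.antipode (R := ℂ) (r.left j))⟫_ℂ =
      ⟪η (star (x i)), η (HopfAlgebra.antipode (R := ℂ) (y i))⟫_ℂ := by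
    conv_rhs => rw [← sum_counit_smul_left r]
    simp only [map_sum, map_smul, inner_sum, inner_smul_right]
  simp only [pairing_mul_right hη, Finset.sum_add_distrib, h2] at h1
  rw [← r.eq, TensorProduct.tmul_sum, map_sum]
  simp only [triplePairing_tmul]
  exact eq_neg_of_add_eq_zero_right h1

/-- The mirror image of `sum_pairing_antipode_right`: expand `⟨η((x₁ S(x₂))*), η(y)⟩`, which sums
to zero over `Δ x`. -/
lemma sum_pairing_antipode_left (hA : IsHopfStar A) {π : A →ₐ[ℂ] Module.End ℂ D}
    {η : A →ₗ[ℂ] D} (hπ : IsStarRep π) (hη : IsCocycle π η)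
    {ι : Type*} (s : Finset ι) (x y : ι → A) :
    ∑ i ∈ s, ⟪η (star (HopfAlgebra.antipode (R := ℂ) (x i))), η (y i)⟫_ℂ =
      -triplePairing π η (∑ i ∈ s,
        TensorProduct.assoc ℂ A A A (comul (R := ℂ) (x i) ⊗ₜ[ℂ] y i)) := by
  rw [map_sum, ← Finset.sum_neg_distrib]
  refine Finset.sum_congr rfl fun i _ => ?_
  have r := Coalgebra.Repr.arbitrary ℂ (x i)
  have h1 : ∑ j ∈ r.index, ⟪η (star (r.left j * HopfAlgebra.antipode (R := ℂ) (r.right j))),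
      η (y i)⟫_ℂ = 0 := by
    rw [← sum_inner, ← map_sum, ← star_sum, HopfAlgebra.sum_mul_antipode_eq_smul r, star_smul,
      star_one, map_smul, cocycle_one hη, smul_zero, inner_zero_left]
  have h2 : ∑ j ∈ r.index, counit (R := ℂ) (r.left j) *
      ⟪η (star (HopfAlgebra.antipode (R := ℂ) (r.right j))), η (y i)⟫_ℂ =
      ⟪η (star (HopfAlgebra.antipode (R := ℂ) (x i))), η (y i)⟫_ℂ := by
    conv_rhs => rw [← sum_counit_smul r]
    simp only [← starPairing_apply, map_sum, map_smul, LinearMap.sum_apply, LinearMap.smul_apply,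
      smul_eq_mul]
  simp only [pairing_mul_left hA hπ hη, Finset.sum_add_distrib, h2] at h1
  rw [← r.eq, TensorProduct.sum_tmul, map_sum, map_sum]
  simp only [TensorProduct.assoc_tmul, triplePairing_tmul]
  exact eq_neg_of_add_eq_zero_right h1

/-- For any cocycle `η` and `Δ(a) = ∑ᵢ xᵢ ⊗ yᵢ`:
`∑ᵢ ⟨η((S_α(xᵢ))*), η(α(yᵢ))⟩ = ∑ᵢ ⟨η((α(xᵢ))*), η(S_α(yᵢ))⟩`. -/
theorem two_formulas_agree (hA : IsHopfStar A)
    (α : A →ₗ[ℂ] A) (hα : IsAdmissible α)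
    (π : A →ₐ[ℂ] Module.End ℂ D) (η : A →ₗ[ℂ] D)
    (hπ : IsStarRep π) (hη : IsCocycle π η) :
    ∀ (a : A) (ι : Type u) (s : Finset ι) (x y : ι → A),
      comul (R := ℂ) a = ∑ i ∈ s, x i ⊗ₜ[ℂ] y i →
      ∑ i ∈ s, ⟪η (star (twistedAntipode α (x i))), η (α (y i))⟫_ℂ =
        ∑ i ∈ s, ⟪η (star (α (x i))), η (twistedAntipode α (y i))⟫_ℂ := by
  intro a ι s x y h
  -- `Δ(α a) = ∑ α(xᵢ) ⊗ α(yᵢ)`, so coassociativity applies to `α a` with this decomposition.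
  have hΔ : comul (R := ℂ) (α a) = ∑ i ∈ s, α (x i) ⊗ₜ[ℂ] α (y i) := by
    rw [← hα.comul_comp, h, map_sum]
    simp only [TensorProduct.map_tmul]
  have hassoc := coassoc_apply (R := ℂ) (α a)
  simp only [hΔ, map_sum, LinearMap.rTensor_tmul, LinearMap.lTensor_tmul] at hassoc
  simp only [twistedAntipode, LinearMap.comp_apply]
  rw [sum_pairing_antipode_left hA hπ hη, sum_pairing_antipode_right hη, hassoc]
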